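/- Let 0<ρ<1, 0<τ<1, define g(x) = [τ(1-ρ)e^{−x} / (ρ + τ(1-ρ)e^{−x})] · [1/(−log(ρ + τ(1-ρ)e^{−x}))], and let {d_k} be defined by d_0 = 0, d_{k+1} = d_k − log(ρ + τ(1-ρ)e^{−d_k}). Then for every k ∈ ℕ, g(d_{k+1})/g(d_k) ≥ ρ. -/

import Mathlib

/-!
In terms of `t k = ρ + c * exp (-d k)`, which stays in `(ρ, 1)`, the recursion becomes
`t (k + 1) = s` with `s = ρ + (t k - ρ) * t k`, and `g (d k) = (t k - ρ) / negMulLog (t k)`. For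
`t = t k` the ratio is therefore `t * negMulLog t / negMulLog s`. Gibbs' inequality at the pair
`s, t`, the identity `t - s = (t - ρ) * (1 - t)` and `1 - t ≤ -log t` give
`negMulLog s ≤ t * (1 + t - ρ) * -log t`, and `ρ * (1 + t - ρ) < t` because the difference is
`(t - ρ) * (1 - ρ)`.
-/

open Real Set

theorem negMulLog_le_sub_sub_mul_log {s t : ℝ} (hs : 0 ≤ s) (ht : 0 < t) :
    negMulLog s ≤ t - s - s * log t := by
  rcases hs.eq_or_lt with rfl | hs
  · simpa using ht.le
  have hlog : s * (log t - log s) ≤ s * (t / s - 1) := by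
    rw [← log_div ht.ne' hs.ne']
    exact mul_le_mul_of_nonneg_left (log_le_sub_one_of_pos (div_pos ht hs)) hs.le
  have hsub : s * (t / s - 1) = t - s := by field_simp
  rw [negMulLog]
  linarith

theorem negMulLog_pos {t : ℝ} (ht₀ : 0 < t) (ht₁ : t < 1) : 0 < negMulLog t := by
  rw [negMulLog_eq_neg, neg_pos]
  exact mul_neg_of_pos_of_neg ht₀ (log_neg ht₀ ht₁)

/-- The recursion for `d` in the coordinate `t = ρ + c * exp (-d)`. As `exp (-d)` is multiplied by
`t` in each step, `t` is called the decay factor. -/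
def nextFactor (ρ t : ℝ) : ℝ := ρ + (t - ρ) * t

/-- The function `g` in the coordinate `t = ρ + c * exp (-x)`, in which it no longer depends on `c`
explicitly. -/
noncomputable def factorGain (ρ t : ℝ) : ℝ := (t - ρ) / negMulLog t

section Factor

variable {ρ t : ℝ}

theorem nextFactor_mem_Ioo (hρ : 0 ≤ ρ) (ht : t ∈ Ioo ρ 1) : nextFactor ρ t ∈ Ioo ρ 1 := by
  have ht₀ : 0 < t - ρ := sub_pos.2 ht.1
  constructor
  · exact lt_add_of_pos_right ρ (mul_pos ht₀ (hρ.trans_lt ht.1))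
  · calc ρ + (t - ρ) * t < ρ + (t - ρ) := by gcongr; exact mul_lt_of_lt_one_right ht₀ ht.2
      _ = t := add_sub_cancel ρ t
      _ < 1 := ht.2

theorem negMulLog_nextFactor_le (hρ : 0 ≤ ρ) (ht : t ∈ Ioo ρ 1) :
    negMulLog (nextFactor ρ t) ≤ (1 + t - ρ) * negMulLog t := by
  have ht₀ : 0 < t := hρ.trans_lt ht.1
  have hs₀ : 0 ≤ nextFactor ρ t := hρ.trans (nextFactor_mem_Ioo hρ ht).1.le
  have hlog : 1 - t ≤ -log t := by linarith [log_le_sub_one_of_pos ht₀]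
  calc negMulLog (nextFactor ρ t)
      ≤ t - nextFactor ρ t - nextFactor ρ t * log t := negMulLog_le_sub_sub_mul_log hs₀ ht₀
    _ = (t - ρ) * (1 - t) + nextFactor ρ t * -log t := by rw [nextFactor]; ring
    _ ≤ (t - ρ) * -log t + nextFactor ρ t * -log t := by
        gcongr; exact sub_nonneg.2 ht.1.le
    _ = (1 + t - ρ) * negMulLog t := by rw [nextFactor, negMulLog]; ring

theorem mul_negMulLog_nextFactor_lt (hρ : 0 ≤ ρ) (ht : t ∈ Ioo ρ 1) :
    ρ * negMulLog (nextFactor ρ t) < t * negMulLog t := by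
  have hcoeff : ρ * (1 + t - ρ) < t := by
    have := mul_pos (sub_pos.2 ht.1) (sub_pos.2 (ht.1.trans ht.2))
    linarith
  calc ρ * negMulLog (nextFactor ρ t)
      ≤ ρ * ((1 + t - ρ) * negMulLog t) :=
        mul_le_mul_of_nonneg_left (negMulLog_nextFactor_le hρ ht) hρ
    _ = ρ * (1 + t - ρ) * negMulLog t := (mul_assoc _ _ _).symm
    _ < t * negMulLog t :=
        mul_lt_mul_of_pos_right hcoeff (negMulLog_pos (hρ.trans_lt ht.1) ht.2)

theorem factorGain_nextFactor_div_factorGain (ht : ρ < t) :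
    factorGain ρ (nextFactor ρ t) / factorGain ρ t =
      t * negMulLog t / negMulLog (nextFactor ρ t) := by
  have hsub : t - ρ ≠ 0 := (sub_pos.2 ht).ne'
  have hnext : nextFactor ρ t - ρ = (t - ρ) * t := add_sub_cancel_left ρ _
  rw [factorGain, factorGain, hnext]
  field_simp

theorem lt_factorGain_nextFactor_div_factorGain (hρ : 0 ≤ ρ) (ht : t ∈ Ioo ρ 1) :
    ρ < factorGain ρ (nextFactor ρ t) / factorGain ρ t := by
  have hs := nextFactor_mem_Ioo hρ ht
  rw [factorGain_nextFactor_div_factorGain ht.1,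
    lt_div_iff₀ (negMulLog_pos (hρ.trans_lt hs.1) hs.2)]
  exact mul_negMulLog_nextFactor_lt hρ ht

end Factor

theorem add_mul_exp_neg_sub_log {ρ c x : ℝ} (h : 0 < ρ + c * exp (-x)) :
    ρ + c * exp (-(x - log (ρ + c * exp (-x)))) = nextFactor ρ (ρ + c * exp (-x)) := by
  rw [neg_sub, sub_eq_neg_add, exp_add, exp_log h, nextFactor, add_sub_cancel_left, mul_assoc]

theorem factorGain_add_mul_exp_neg (ρ c x : ℝ) :
    factorGain ρ (ρ + c * exp (-x)) =
      c * exp (-x) / (ρ + c * exp (-x)) * (1 / -log (ρ + c * exp (-x))) := by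
  rw [factorGain, negMulLog_eq_neg, add_sub_cancel_left, div_mul_div_comm, mul_one, mul_neg]

theorem g_ratio_ge_rho_general {ρ c : ℝ} (hρ : 0 ≤ ρ) (hc : 0 < c) {g : ℝ → ℝ}
    (hg : ∀ x, g x = c * exp (-x) / (ρ + c * exp (-x)) * (1 / -log (ρ + c * exp (-x))))
    {d : ℕ → ℝ} (hd₀ : ρ + c * exp (-d 0) < 1)
    (hd : ∀ k, d (k + 1) = d k - log (ρ + c * exp (-d k))) (k : ℕ) :
    ρ < g (d (k + 1)) / g (d k) := by
  have hlt (x : ℝ) : ρ < ρ + c * exp (-x) := lt_add_of_pos_right ρ (mul_pos hc (exp_pos _))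
  have hnext (k : ℕ) : ρ + c * exp (-d (k + 1)) = nextFactor ρ (ρ + c * exp (-d k)) := by
    rw [hd, add_mul_exp_neg_sub_log (hρ.trans_lt (hlt _))]
  have hmem (k : ℕ) : ρ + c * exp (-d k) ∈ Ioo ρ 1 := by
    induction k with
    | zero => exact ⟨hlt _, hd₀⟩
    | succ k ih => exact hnext k ▸ nextFactor_mem_Ioo hρ ih
  rw [hg, hg, ← factorGain_add_mul_exp_neg, ← factorGain_add_mul_exp_neg, hnext]
  exact lt_factorGain_nextFactor_div_factorGain hρ (hmem k)

theorem g_ratio_ge_rho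
    (ρ τ : ℝ) (hρ0 : 0 < ρ) (hρ1 : ρ < 1) (hτ0 : 0 < τ) (hτ1 : τ < 1)
    (g : ℝ → ℝ)
    (hg : ∀ x, g x = (τ * (1 - ρ) * Real.exp (-x) / (ρ + τ * (1 - ρ) * Real.exp (-x))) *
      (1 / (-Real.log (ρ + τ * (1 - ρ) * Real.exp (-x)))))
    (d : ℕ → ℝ) (hd0 : d 0 = 0)
    (hd : ∀ k, d (k + 1) = d k - Real.log (ρ + τ * (1 - ρ) * Real.exp (-(d k)))) :
    ∀ k : ℕ, g (d (k + 1)) / g (d k) ≥ ρ := by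
  have hstart : ρ + τ * (1 - ρ) * exp (-d 0) < 1 := by
    rw [hd0, neg_zero, exp_zero]
    linarith [mul_lt_of_lt_one_left (sub_pos.2 hρ1) hτ1]
  exact fun k => (g_ratio_ge_rho_general hρ0.le (mul_pos hτ0 (sub_pos.2 hρ1)) hg hstart hd k).le
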